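/- arXiv:2205.09963 — 2 statements merged into one kernel-verified Lean document; each statement's English description precedes it below -/
import Mathlib

section
/- Let n ≥ 2 and let Π be a set where each x ∈ Π is a path-finding instance consisting of a directed graph on vertex set V = {1,…,n} with edge set E_x ⊆ V×V (no self-loops), edge weights w_x : E_x → ℝ_{≥0}, and a start vertex s_x ∈ V. For x ∈ Π define G(x) = {(v, c) ∈ V × ℝ : c is the cost of some simple directed path from s_x to v in x}. For each ρ ∈ ℝⁿ let u_ρ : Π → ℝ and assume the score-order invariance: for every x ∈ Π and every ρ, ρ' ∈ ℝⁿ, if for all (v, g), (v', g') ∈ G(x) one has g + ρ_v ≤ g' + ρ_{v'} ⟺ g + ρ'_v ≤ g' + ρ'_{v'}, then u_ρ(x) = u_{ρ'}(x). Then any pairwise distinct x_1, …, x_N ∈ Π pseudo-shattered by U = {u_ρ : ρ ∈ ℝⁿ} satisfy N ≤ 4n·log₂(2e·n·(n!)²); in particular the pseudo-dimension of U is O(n² lg n). -/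
/-- A simple directed path from `s` to `v` in the graph on `Fin n` with edge set `E`:
a nonempty list of pairwise distinct vertices starting at `s`, ending at `v`, with
consecutive vertices joined by edges. -/
def IsSimplePath (n : ℕ) (E : Finset (Fin n × Fin n)) (s v : Fin n)
    (p : List (Fin n)) : Prop :=
  p.Nodup ∧ p.head? = some s ∧ p.getLast? = some v ∧
    p.Chain' (fun a b => (a, b) ∈ E)

/-- The cost of a path: the sum of the weights of its consecutive edges. -/
def pathCost (n : ℕ) (w : Fin n × Fin n → ℝ) (p : List (Fin n)) : ℝ :=
  ((p.zip p.tail).map w).sum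

/-- The set of pairs `(v, c)` such that `c` is the cost of some simple directed path
from `s` to `v`. -/
def Gset (n : ℕ) (E : Finset (Fin n × Fin n)) (w : Fin n × Fin n → ℝ)
    (s : Fin n) : Set (Fin n × ℝ) :=
  {vc | ∃ p : List (Fin n), IsSimplePath n E s vc.1 p ∧ pathCost n w p = vc.2}

/-!
For a fixed instance, the order of the scores `g + ρ v` over the finite set `G(x)` is recorded by
which of the half-spaces `ρ v - ρ v' ≤ g' - g` of the parameter space contain `ρ`. There are at most
`n · n!` simple paths from the start vertex, hence at most `N (n · n!)²` half-spaces in total.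
A family of half-spaces `L j ≤ c j` of `ℝⁿ` shatters at most `n` indices, since a linear dependence
among `n + 1` of the `L j` rules out one of the sign patterns. By the Sauer–Shelah lemma there are
at most `(N (n · n!)² + 1)ⁿ` patterns, and pseudo-shattering needs `2 ^ N` of them. For `T = N / n`
this gives `2 ^ T ≤ C T` with `C = 2 n (n · n!)²`, and `T ≤ 4 · 2 ^ (T / 2)` turns it into
`T ≤ 2 log₂ (4 C)`.
-/

open Finset Module
open scoped Nat

section Dependence

variable {α 𝕜 M : Type*} [Field 𝕜] [LinearOrder 𝕜] [IsStrictOrderedRing 𝕜] [AddCommGroup M]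
  [Module 𝕜 M]

lemma exists_sum_smul_eq_zero_and_neg {T : Finset α} {v : α → M}
    (h : ¬ LinearIndepOn 𝕜 v T) :
    ∃ g : α → 𝕜, ∑ j ∈ T, g j • v j = 0 ∧ ∃ j ∈ T, g j < 0 := by
  obtain ⟨g, hg, i, hi, hgi⟩ := not_linearIndepOn_finset_iff.1 h
  rcases hgi.lt_or_gt with hneg | hpos
  · exact ⟨g, hg, i, hi, hneg⟩
  · exact ⟨-g, by simpa using hg, i, hi, neg_neg_of_pos hpos⟩

/-- The sum of `g j * (L j τ - c j)` does not depend on `τ`, but the two sign patterns make it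
negative at `ρ` and nonnegative at `σ`. -/
lemma not_forall_le_iff_neg_of_sum_smul_eq_zero {L : α → Dual 𝕜 M} {c : α → 𝕜} {T : Finset α}
    {g : α → 𝕜} (hg : ∑ j ∈ T, g j • L j = 0) (hneg : ∃ j ∈ T, g j < 0) {ρ σ : M}
    (hρ : ∀ j ∈ T, L j ρ ≤ c j ↔ 0 ≤ g j) : ¬ ∀ j ∈ T, L j σ ≤ c j ↔ g j < 0 := by
  intro hσ
  have sum_eq (τ : M) : ∑ j ∈ T, g j * (L j τ - c j) = -∑ j ∈ T, g j * c j := by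
    have hτ : ∑ j ∈ T, g j * L j τ = 0 := by simpa using DFunLike.congr_fun hg τ
    simp only [mul_sub, sum_sub_distrib, hτ, zero_sub]
  have sum_neg_at_ρ : ∑ j ∈ T, g j * (L j ρ - c j) < 0 := by
    obtain ⟨i, hi, hgi⟩ := hneg
    refine sum_neg' (fun j hj => ?_) ⟨i, hi, ?_⟩
    · rcases le_or_gt 0 (g j) with h | h
      · exact mul_nonpos_of_nonneg_of_nonpos h (sub_nonpos.2 ((hρ j hj).2 h))
      · exact mul_nonpos_of_nonpos_of_nonneg h.le
          (sub_nonneg.2 (lt_of_not_ge (mt (hρ j hj).1 h.not_ge)).le)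
    · exact mul_neg_of_neg_of_pos hgi
        (sub_pos.2 (lt_of_not_ge (mt (hρ i hi).1 hgi.not_ge)))
  have sum_nonneg_at_σ : 0 ≤ ∑ j ∈ T, g j * (L j σ - c j) := by
    refine Finset.sum_nonneg fun j hj => ?_
    rcases lt_or_ge (g j) 0 with h | h
    · exact mul_nonneg_of_nonpos_of_nonpos h.le (sub_nonpos.2 ((hσ j hj).2 h))
    · exact mul_nonneg h (sub_nonneg.2 (lt_of_not_ge (mt (hσ j hj).1 h.not_gt)).le)
  rw [sum_eq] at sum_neg_at_ρ sum_nonneg_at_σ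
  exact sum_neg_at_ρ.not_ge sum_nonneg_at_σ

end Dependence

section HalfspaceArrangement

variable {α : Type*} [Fintype α]

lemma sum_Iic_choose_le_pow (m d : ℕ) : ∑ k ∈ Iic d, m.choose k ≤ (m + 1) ^ d := by
  calc ∑ k ∈ Iic d, m.choose k
    _ ≤ ∑ k ∈ Iic d, m ^ k * d.choose k := by
        refine sum_le_sum fun k hk => (Nat.choose_le_pow m k).trans ?_
        exact Nat.le_mul_of_pos_right _ (Nat.choose_pos (mem_Iic.mp hk))
    _ = (m + 1) ^ d := by
        simp [add_pow, Nat.range_succ_eq_Iic]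

lemma card_le_pow_vcDim [DecidableEq α] (𝒜 : Finset (Finset α)) :
    #𝒜 ≤ (Fintype.card α + 1) ^ 𝒜.vcDim :=
  (card_le_card_shatterer 𝒜).trans <|
    card_shatterer_le_sum_vcDim.trans <| sum_Iic_choose_le_pow _ _

variable {𝕜 M : Type*} [Field 𝕜] [LinearOrder 𝕜] [AddCommGroup M] [Module 𝕜 M]

/-- The cell containing `ρ` in the arrangement of half-spaces `L j ≤ c j`, encoded as the set of
indices of the half-spaces that contain `ρ`. -/
def halfspacePattern (L : α → Dual 𝕜 M) (c : α → 𝕜) (ρ : M) : Finset α :=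
  {j | L j ρ ≤ c j}

lemma mem_halfspacePattern {L : α → Dual 𝕜 M} {c : α → 𝕜} {ρ : M} {j : α} :
    j ∈ halfspacePattern L c ρ ↔ L j ρ ≤ c j := by
  simp [halfspacePattern]

variable [IsStrictOrderedRing 𝕜] [FiniteDimensional 𝕜 M]

lemma card_le_finrank_of_shatters_halfspacePattern [DecidableEq α] {L : α → Dual 𝕜 M} {c : α → 𝕜}
    {𝒜 : Finset (Finset α)} (h𝒜 : (𝒜 : Set (Finset α)) ⊆ Set.range (halfspacePattern L c))
    {T : Finset α} (hT : 𝒜.Shatters T) : #T ≤ finrank 𝕜 M := by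
  by_contra! hcard
  have hdep : ¬ LinearIndepOn 𝕜 L T := fun h => by
    have hle : #T ≤ finrank 𝕜 (Dual 𝕜 M) := by
      simpa using LinearIndependent.fintype_card_le_finrank h
    rw [Subspace.dual_finrank_eq] at hle
    exact hcard.not_ge hle
  obtain ⟨g, hg, hneg⟩ := exists_sum_smul_eq_zero_and_neg hdep
  have realize (p : α → Prop) [DecidablePred p] : ∃ ρ : M, ∀ j ∈ T, L j ρ ≤ c j ↔ p j := by
    obtain ⟨S, hS, hTS⟩ := hT (filter_subset p T)
    obtain ⟨ρ, rfl⟩ := h𝒜 hS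
    refine ⟨ρ, fun j hj => ?_⟩
    simpa [hj, mem_halfspacePattern] using Finset.ext_iff.1 hTS j
  obtain ⟨ρ, hρ⟩ := realize (0 ≤ g ·)
  obtain ⟨σ, hσ⟩ := realize (g · < 0)
  exact not_forall_le_iff_neg_of_sum_smul_eq_zero hg hneg hρ hσ

theorem ncard_range_halfspacePattern_le (L : α → Dual 𝕜 M) (c : α → 𝕜) :
    (Set.range (halfspacePattern L c)).ncard ≤ (Fintype.card α + 1) ^ finrank 𝕜 M := by
  classical
  let 𝒜 : Finset (Finset α) := (Set.toFinite (Set.range (halfspacePattern L c))).toFinset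
  have h𝒜 : (𝒜 : Set (Finset α)) ⊆ Set.range (halfspacePattern L c) := by simp [𝒜]
  have hvc : 𝒜.vcDim ≤ finrank 𝕜 M := Finset.sup_le fun T hT =>
    card_le_finrank_of_shatters_halfspacePattern h𝒜 (mem_shatterer.1 hT)
  calc (Set.range (halfspacePattern L c)).ncard
    _ = #𝒜 := Set.ncard_eq_toFinset_card _
    _ ≤ (Fintype.card α + 1) ^ 𝒜.vcDim := card_le_pow_vcDim 𝒜
    _ ≤ (Fintype.card α + 1) ^ finrank 𝕜 M := Nat.pow_le_pow_right (Nat.succ_pos _) hvc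

end HalfspaceArrangement

section PseudoShattering

variable {Θ X β ι : Type*} [LE β]

/-- The family of functions `u θ` on `X` pseudo-shatters the points `x i`: for suitable thresholds
`z i`, every set of indices is of the form `{i | z i ≤ u θ (x i)}`. -/
def PseudoShatters (u : Θ → X → β) (x : ι → X) : Prop :=
  ∃ z : ι → β, ∀ b : ι → Bool, ∃ θ, ∀ i, z i ≤ u θ (x i) ↔ b i = true

lemma PseudoShatters.two_pow_card_le_ncard_range [Fintype ι] {u : Θ → X → β} {x : ι → X}
    (hshatter : PseudoShatters u x) {γ : Type*} [Finite γ] {f : Θ → γ}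
    (hf : ∀ θ θ', f θ = f θ' → ∀ i, u θ (x i) = u θ' (x i)) :
    2 ^ Fintype.card ι ≤ (Set.range f).ncard := by
  classical
  obtain ⟨z, hz⟩ := hshatter
  choose θ hθ using hz
  have hinj : Function.Injective (f ∘ θ) := fun b b' hbb' => funext fun i => by
    rw [Bool.eq_iff_iff, ← hθ, ← hθ, hf _ _ hbb' i]
  calc 2 ^ Fintype.card ι
    _ = (Set.range (f ∘ θ)).ncard := by simp [Set.ncard_range_of_injective hinj]
    _ ≤ (Set.range f).ncard := Set.ncard_le_ncard (Set.range_comp_subset_range θ f)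

end PseudoShattering

section ScoreOrder

variable {V 𝕜 : Type*} [Field 𝕜] [LinearOrder 𝕜]

/-- The parameters `ρ` and `ρ'` order the scores `g + ρ v` of the pairs `(v, g) ∈ G` in the same
way. -/
def SameScoreOrder (G : Set (V × 𝕜)) (ρ ρ' : V → 𝕜) : Prop :=
  ∀ a ∈ G, ∀ b ∈ G, a.2 + ρ a.1 ≤ b.2 + ρ b.1 ↔ a.2 + ρ' a.1 ≤ b.2 + ρ' b.1

section ScoreArrangement

variable {ι : Type*} {G : ι → Set (V × 𝕜)}

/-- The linear part `ρ v - ρ v'` of the half-space of those `ρ` for which the pair `(v, g)` scores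
at most as much as `(v', g')`, both pairs being taken from the same set `G i`. -/
def scoreForm (j : Σ i, G i × G i) : Dual 𝕜 (V → 𝕜) :=
  (LinearMap.proj j.2.1.1.1 : (V → 𝕜) →ₗ[𝕜] 𝕜) - LinearMap.proj j.2.2.1.1

/-- The bound `g' - g` of the half-space whose linear part is `scoreForm`. -/
def scoreBound (j : Σ i, G i × G i) : 𝕜 :=
  j.2.2.1.2 - j.2.1.1.2

variable [IsStrictOrderedRing 𝕜]

lemma scoreForm_le_scoreBound_iff (j : Σ i, G i × G i) (ρ : V → 𝕜) :
    scoreForm j ρ ≤ scoreBound j ↔ j.2.1.1.2 + ρ j.2.1.1.1 ≤ j.2.2.1.2 + ρ j.2.2.1.1 := by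
  simp only [scoreForm, scoreBound, LinearMap.sub_apply, LinearMap.proj_apply]
  rw [sub_le_sub_iff, add_comm (ρ _), add_comm]

lemma sameScoreOrder_of_halfspacePattern_eq [Fintype (Σ i, G i × G i)] {ρ ρ' : V → 𝕜}
    (h : halfspacePattern (scoreForm (G := G)) scoreBound ρ =
      halfspacePattern scoreForm scoreBound ρ') (i : ι) : SameScoreOrder (G i) ρ ρ' := by
  intro a ha b hb
  have hj := Finset.ext_iff.1 h ⟨i, ⟨a, ha⟩, ⟨b, hb⟩⟩
  simpa only [mem_halfspacePattern, scoreForm_le_scoreBound_iff] using hj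

end ScoreArrangement

theorem PseudoShatters.two_pow_card_le_of_sameScoreOrder [IsStrictOrderedRing 𝕜] [Fintype V]
    {ι X β : Type*} [Fintype ι] [LE β] {G : X → Set (V × 𝕜)} {u : (V → 𝕜) → X → β}
    (hinv : ∀ x ρ ρ', SameScoreOrder (G x) ρ ρ' → u ρ x = u ρ' x)
    {K : ℕ} (hK : ∀ x, (G x).encard ≤ K) {x : ι → X} (hshatter : PseudoShatters u x) :
    2 ^ Fintype.card ι ≤ (Fintype.card ι * K ^ 2 + 1) ^ Fintype.card V := by
  have (i : ι) : Fintype (G (x i)) := (Set.finite_of_encard_le_coe (hK (x i))).fintype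
  have card_le : Fintype.card (Σ i, G (x i) × G (x i)) ≤ Fintype.card ι * K ^ 2 := by
    have hG (i : ι) : Fintype.card (G (x i)) ≤ K := by
      exact_mod_cast (Set.coe_fintypeCard (G (x i))).trans_le (hK (x i))
    calc Fintype.card (Σ i, G (x i) × G (x i))
      _ = ∑ i, Fintype.card (G (x i)) ^ 2 := by simp [sq]
      _ ≤ ∑ _i : ι, K ^ 2 := sum_le_sum fun i _ => Nat.pow_le_pow_left (hG i) 2
      _ = Fintype.card ι * K ^ 2 := by simp
  calc 2 ^ Fintype.card ι
    _ ≤ (Set.range (halfspacePattern (scoreForm (G := fun i => G (x i))) scoreBound)).ncard :=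
        hshatter.two_pow_card_le_ncard_range fun ρ ρ' h i =>
          hinv _ _ _ (sameScoreOrder_of_halfspacePattern_eq h i)
    _ ≤ (Fintype.card (Σ i, G (x i) × G (x i)) + 1) ^ finrank 𝕜 (V → 𝕜) :=
        ncard_range_halfspacePattern_le _ _
    _ ≤ (Fintype.card ι * K ^ 2 + 1) ^ Fintype.card V := by
        rw [finrank_fintype_fun_eq_card]
        gcongr

end ScoreOrder

section SimplePaths

lemma descFactorial_le_factorial (n k : ℕ) : n.descFactorial k ≤ n ! := by
  rcases le_or_gt k n with hk | hk
  · rw [← Nat.factorial_mul_descFactorial hk]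
    exact Nat.le_mul_of_pos_left _ (Nat.factorial_pos _)
  · simp [Nat.descFactorial_of_lt hk]

lemma encard_nodup_ne_nil_le (V : Type*) [Fintype V] :
    {p : List V | p.Nodup ∧ p ≠ []}.encard ≤ (Fintype.card V * (Fintype.card V)! : ℕ) := by
  classical
  let ofEmbedding (q : Σ k : Fin (Fintype.card V), Fin (k + 1) ↪ V) : List V := List.ofFn q.2
  have hsub : {p : List V | p.Nodup ∧ p ≠ []} ⊆ Set.range ofEmbedding := by
    rintro p ⟨hnodup, hne⟩
    have hlen : p.length - 1 + 1 = p.length := Nat.sub_add_cancel (List.length_pos_iff.2 hne)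
    have hlt : p.length - 1 < Fintype.card V := by
      have := hnodup.length_le_card
      omega
    refine ⟨⟨⟨p.length - 1, hlt⟩, (finCongr hlen).toEmbedding.trans
      ⟨p.get, List.nodup_iff_injective_get.1 hnodup⟩⟩, ?_⟩
    exact List.ext_get (by simp [ofEmbedding, hlen]) fun _ _ _ => by
      simp only [ofEmbedding, List.get_ofFn]
      rfl
  calc {p : List V | p.Nodup ∧ p ≠ []}.encard
    _ ≤ (Set.range ofEmbedding).encard := Set.encard_le_encard hsub
    _ ≤ (Set.univ : Set (Σ k : Fin (Fintype.card V), Fin (k + 1) ↪ V)).encard := by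
        rw [← Set.image_univ]
        exact Set.encard_image_le _ _
    _ = (∑ k : Fin (Fintype.card V), (Fintype.card V).descFactorial (k + 1) : ℕ) := by
        simp [Fintype.card_embedding_eq]
    _ ≤ (∑ _k : Fin (Fintype.card V), (Fintype.card V)! : ℕ) := by
        gcongr with k
        exact descFactorial_le_factorial _ _
    _ = (Fintype.card V * (Fintype.card V)! : ℕ) := by simp

lemma encard_Gset_le (n : ℕ) (E : Finset (Fin n × Fin n)) (w : Fin n × Fin n → ℝ) (s : Fin n) :
    (Gset n E w s).encard ≤ (n * n ! : ℕ) := by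
  have hsub : Gset n E w s ⊆
      (fun p => (p.getLastD s, pathCost n w p)) '' {p | p.Nodup ∧ p ≠ []} := by
    rintro ⟨v, c⟩ ⟨p, ⟨hnodup, hhead, hlast, -⟩, hcost⟩
    refine ⟨p, ⟨hnodup, ?_⟩, ?_⟩
    · rintro rfl
      simp at hhead
    · simp_all [List.getLastD_eq_getLast?]
  calc (Gset n E w s).encard
    _ ≤ _ := Set.encard_le_encard hsub
    _ ≤ {p : List (Fin n) | p.Nodup ∧ p ≠ []}.encard := Set.encard_image_le _ _
    _ ≤ (n * n ! : ℕ) := by simpa using encard_nodup_ne_nil_le (Fin n)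

end SimplePaths

section LogarithmicBound

lemma le_two_mul_logb_of_two_rpow_le {C T : ℝ} (hT : 0 < T) (h : (2 : ℝ) ^ T ≤ C * T) :
    T ≤ 2 * Real.logb 2 (4 * C) := by
  have hC : 0 < C := pos_of_mul_pos_left ((by positivity : (0 : ℝ) < 2 ^ T).trans_le h) hT.le
  have hT_le : T ≤ 4 * 2 ^ (T / 2) := by
    have hexp := Real.add_one_le_exp (Real.log 2 * (T / 2))
    rw [← Real.rpow_def_of_pos two_pos] at hexp
    nlinarith [Real.log_two_gt_d9]
  have hhalf : (2 : ℝ) ^ (T / 2) * 2 ^ (T / 2) ≤ 4 * C * 2 ^ (T / 2) := by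
    calc (2 : ℝ) ^ (T / 2) * 2 ^ (T / 2)
      _ = 2 ^ T := by rw [← Real.rpow_add two_pos, add_halves]
      _ ≤ C * T := h
      _ ≤ C * (4 * 2 ^ (T / 2)) := by gcongr
      _ = 4 * C * 2 ^ (T / 2) := by ring
  have hlog : T / 2 ≤ Real.logb 2 (4 * C) :=
    (Real.le_logb_iff_rpow_le one_lt_two (by positivity)).2
      (le_of_mul_le_mul_right hhalf (by positivity))
  linarith

lemma le_mul_logb_of_two_pow_le {N B n : ℕ} (h : 2 ^ N ≤ (N * B + 1) ^ n) :
    (N : ℝ) ≤ 2 * n * Real.logb 2 (8 * n * B) := by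
  rcases N.eq_zero_or_pos with rfl | hN
  · have hlog : 0 ≤ Real.logb 2 (8 * n * B) := by
      exact_mod_cast div_nonneg (Real.log_natCast_nonneg (8 * n * B)) (Real.log_nonneg one_le_two)
    rw [Nat.cast_zero]
    positivity
  have hone : 1 < (N * B + 1) ^ n := (Nat.one_lt_two_pow hN.ne').trans_le h
  have hn : 0 < n := Nat.pos_of_ne_zero fun hn => by simp [hn] at hone
  have hB : 0 < B := Nat.pos_of_ne_zero fun hB => by simp [hB] at hone
  have hratio : (2 : ℝ) ^ (N / n : ℝ) ≤ 2 * n * B * (N / n) := by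
    have hroot : (2 : ℝ) ^ (N / n : ℝ) ≤ N * B + 1 := by
      refine le_of_pow_le_pow_left₀ hn.ne' (by positivity) ?_
      rw [← Real.rpow_mul_natCast two_pos.le, div_mul_cancel₀ _ (by positivity), Real.rpow_natCast]
      exact_mod_cast h
    have hNB : (1 : ℝ) ≤ N * B := mod_cast Nat.mul_pos hN hB
    calc (2 : ℝ) ^ (N / n : ℝ)
      _ ≤ N * B + 1 := hroot
      _ ≤ 2 * (N * B) := by linarith
      _ = 2 * n * B * (N / n) := by field_simp
  have hT := le_two_mul_logb_of_two_rpow_le (by positivity) hratio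
  rw [div_le_iff₀ (by positivity)] at hT
  calc (N : ℝ)
    _ ≤ 2 * Real.logb 2 (4 * (2 * n * B)) * n := hT
    _ = 2 * n * Real.logb 2 (8 * n * B) := by ring_nf

lemma two_mul_mul_logb_factorial_le (n : ℕ) :
    2 * n * Real.logb 2 (8 * n * (n * n ! : ℝ) ^ 2) ≤
      4 * n * Real.logb 2 (2 * Real.exp 1 * n * (n ! : ℝ) ^ 2) := by
  rcases n.eq_zero_or_pos with rfl | hn
  · simp
  have hfact : (n : ℝ) ≤ n ! := mod_cast n.self_le_factorial
  have hexp : 2 ≤ Real.exp 1 := by linarith [Real.add_one_le_exp 1]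
  have harg : 8 * n * (n * n ! : ℝ) ^ 2 ≤ (2 * Real.exp 1 * n * (n ! : ℝ) ^ 2) ^ 2 := by
    have hn1 : (1 : ℝ) ≤ n := mod_cast hn
    have hsq : 2 * n ≤ Real.exp 1 ^ 2 * (n ! : ℝ) ^ 2 := by
      calc 2 * (n : ℝ)
        _ ≤ 2 ^ 2 * (n : ℝ) ^ 2 := by nlinarith
        _ ≤ Real.exp 1 ^ 2 * (n ! : ℝ) ^ 2 := by gcongr
    calc 8 * n * (n * n ! : ℝ) ^ 2
      _ = 4 * n ^ 2 * (n ! : ℝ) ^ 2 * (2 * n) := by ring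
      _ ≤ 4 * n ^ 2 * (n ! : ℝ) ^ 2 * (Real.exp 1 ^ 2 * (n ! : ℝ) ^ 2) := by gcongr
      _ = (2 * Real.exp 1 * n * (n ! : ℝ) ^ 2) ^ 2 := by ring
  calc 2 * n * Real.logb 2 (8 * n * (n * n ! : ℝ) ^ 2)
    _ ≤ 2 * n * Real.logb 2 ((2 * Real.exp 1 * n * (n ! : ℝ) ^ 2) ^ 2) := by
        gcongr
        exact one_lt_two
    _ = 4 * n * Real.logb 2 (2 * Real.exp 1 * n * (n ! : ℝ) ^ 2) := by
        rw [Real.logb_pow]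
        ring

end LogarithmicBound

theorem stmt_2_general {n N : ℕ} {P : Type*} (E : P → Finset (Fin n × Fin n))
    (w : P → Fin n × Fin n → ℝ) (s : P → Fin n) (u : (Fin n → ℝ) → P → ℝ)
    (hinv : ∀ x ρ ρ', SameScoreOrder (Gset n (E x) (w x) (s x)) ρ ρ' → u ρ x = u ρ' x)
    (x : Fin N → P) (hshatter : PseudoShatters u x) :
    (N : ℝ) ≤ 4 * n * Real.logb 2 (2 * Real.exp 1 * n * (n ! : ℝ) ^ 2) := by
  have hpow : 2 ^ N ≤ (N * (n * n !) ^ 2 + 1) ^ n := by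
    simpa using hshatter.two_pow_card_le_of_sameScoreOrder hinv
      fun x => encard_Gset_le n (E x) (w x) (s x)
  have hN := le_mul_logb_of_two_pow_le hpow
  push_cast at hN
  exact hN.trans (two_mul_mul_logb_factorial_le n)

/-- pseudo-dimension bound for A* on general path-finding instances:
if `u ρ` depends on `ρ` only through the order of the scores `g + ρ v` over
`(v, g) ∈ G(x)`, then any pairwise-distinct pseudo-shattered set of size `N`
satisfies `N ≤ 4n·log₂(2e·n·(n!)²)`, i.e. `Pdim = O(n² lg n)`. -/
theorem stmt_2 (n : ℕ) (hn : 2 ≤ n) (P : Type*)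
    (E : P → Finset (Fin n × Fin n))
    (hloop : ∀ x : P, ∀ e ∈ E x, e.1 ≠ e.2)
    (w : P → Fin n × Fin n → ℝ)
    (hw : ∀ x : P, ∀ e ∈ E x, 0 ≤ w x e)
    (s : P → Fin n)
    (u : (Fin n → ℝ) → P → ℝ)
    (hinv : ∀ (x : P) (ρ ρ' : Fin n → ℝ),
      (∀ vg ∈ Gset n (E x) (w x) (s x), ∀ vg' ∈ Gset n (E x) (w x) (s x),
        (vg.2 + ρ vg.1 ≤ vg'.2 + ρ vg'.1 ↔ vg.2 + ρ' vg.1 ≤ vg'.2 + ρ' vg'.1)) →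
      u ρ x = u ρ' x)
    (N : ℕ) (x : Fin N → P) (hx : Function.Injective x)
    (hshatter : ∃ z : Fin N → ℝ, ∀ b : Fin N → Bool, ∃ ρ : Fin n → ℝ,
      ∀ i : Fin N, (z i ≤ u ρ (x i) ↔ b i = true)) :
    (N : ℝ) ≤ 4 * n * Real.logb 2 (2 * Real.exp 1 * n * ((Nat.factorial n : ℝ)) ^ 2) :=
  stmt_2_general E w s u hinv x hshatter
end

section
/- Let n ≥ 2 and ℓ ≥ 1 be integers, and let Π be a set where each x ∈ Π is a path-finding instance consisting of a directed graph on vertex set V = {1,…,n} with edge set E_x ⊆ V×V (no self-loops), edge weights w_x : E_x → {0, 1, …, ℓ} taking non-negative integer values at most ℓ, and a start vertex s_x ∈ V. For x ∈ Π define G(x) = {(v, c) ∈ V × ℝ : c is the cost of some simple directed path from s_x to v in x}. For each ρ ∈ ℝⁿ let u_ρ : Π → ℝ and assume the score-order invariance: for every x ∈ Π and every ρ, ρ' ∈ ℝⁿ, if for all (v, g), (v', g') ∈ G(x) one has g + ρ_v ≤ g' + ρ_{v'} ⟺ g + ρ'_v ≤ g' + ρ'_{v'}, then u_ρ(x) =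 u_{ρ'}(x). Then any pairwise distinct x_1, …, x_N ∈ Π pseudo-shattered by U = {u_ρ : ρ ∈ ℝⁿ} satisfy N ≤ 4n·log₂(2e·n·(n²ℓ)²); in particular the pseudo-dimension of U is O(n lg(nℓ)), and is O(n lg n) when ℓ is polynomial in n. -/
/-!
Costs of simple paths are natural numbers below `L = nℓ`, so `u ρ` depends on `ρ` only through the
truth values of `g + ρ v ≤ g' + ρ v'` for naturals `g, g' < L`. Splitting `ρ v` into integer and
fractional part, such a comparison is determined by the order of the fractional parts and by the
differences of the integer parts truncated to `[-L, L]`. The former is recorded by ranks below `n`.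
The latter survive when the integer parts are pushed together: replace each of them by its rank in
the union `S` of the windows `[⌊ρ v⌋, ⌊ρ v⌋ + L)`. A gap of at most `L` lies inside `S` and is kept,
and a longer gap keeps length at least `L`. As `S` has at most `nL` elements, at most
`(nL · n) ^ n = (n³ℓ) ^ n` functions `u ρ` remain, whereas shattering `N` points needs `2 ^ N`.
-/

section Rank

open Finset

variable {α : Type*} [LinearOrder α] {S : Finset α} {a b : α}

/-- The rank of `a` in the finite set `S`, counted from `0`; `a` need not belong to `S`. -/
def rankIn (S : Finset α) (a : α) : ℕ := #{x ∈ S | x < a}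

theorem rankIn_lt_card (ha : a ∈ S) : rankIn S a < #S :=
  card_lt_card (filter_ssubset.2 ⟨a, ha, lt_irrefl a⟩)

theorem rankIn_mono (S : Finset α) : Monotone (rankIn S) := fun _ _ hab =>
  card_le_card (monotone_filter_right S fun _ _ hx => lt_of_lt_of_le hx hab)

theorem rankIn_lt_rankIn_iff (ha : a ∈ S) : rankIn S a < rankIn S b ↔ a < b := by
  refine ⟨(rankIn_mono S).reflect_lt, fun hab => card_lt_card ?_⟩
  refine (ssubset_iff_of_subset ?_).2 ⟨a, by simp [ha, hab], by simp⟩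
  exact monotone_filter_right S fun _ _ hx => lt_trans hx hab

theorem rankIn_add_card_inter_Ico [LocallyFiniteOrder α] (S : Finset α) (hab : a ≤ b) :
    rankIn S a + #(S ∩ Ico a b) = rankIn S b := by
  have hdisj : Disjoint {x ∈ S | x < a} (S ∩ Ico a b) := by
    simp only [disjoint_left, mem_filter, mem_inter, mem_Ico]
    exact fun x hx hx' => hx.2.not_ge hx'.2.1
  rw [rankIn, rankIn, ← card_union_of_disjoint hdisj]
  congr 1
  ext x
  simp only [mem_union, mem_filter, mem_inter, mem_Ico]
  have := lt_or_ge x a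
  have : x < a → x < b := fun hx => hx.trans_le hab
  tauto

end Rank

section Compression

open Finset

variable {S : Finset ℤ} {L : ℕ}

theorem min_rankIn_sub_rankIn {a b : ℤ} (hab : a ≤ b) (hS : Ico a (a + L) ⊆ S) :
    min ((rankIn S b : ℤ) - rankIn S a) L = min (b - a) L := by
  have hrank := rankIn_add_card_inter_Ico S hab
  have hupper : #(S ∩ Ico a b) ≤ #(Ico a b) := card_le_card inter_subset_right
  have hlower : #(Ico a (min b (a + L))) ≤ #(S ∩ Ico a b) :=
    card_le_card <| subset_inter
      ((Ico_subset_Ico_right (min_le_right _ _)).trans hS) (Ico_subset_Ico_right (min_le_left _ _))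
  rw [Int.card_Ico] at hupper hlower
  omega

theorem le_rankIn_sub_rankIn_iff {a b k : ℤ} (ha : Ico a (a + L) ⊆ S) (hb : Ico b (b + L) ⊆ S)
    (hk : -L < k) (hk' : k ≤ L) : k ≤ (rankIn S b : ℤ) - rankIn S a ↔ k ≤ b - a := by
  rcases le_total a b with hab | hba
  · have := min_rankIn_sub_rankIn hab ha
    omega
  · have := min_rankIn_sub_rankIn hba hb
    omega

variable {V : Type*} [Fintype V]

/-- The union of the integer windows `[f v, f v + L)`. Replacing each `f v` by its rank in this set
preserves the differences truncated to `[-L, L]`. -/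
noncomputable def windows (L : ℕ) (f : V → ℤ) : Finset ℤ :=
  univ.biUnion fun v => Ico (f v) (f v + L)

theorem Ico_subset_windows (L : ℕ) (f : V → ℤ) (v : V) : Ico (f v) (f v + L) ⊆ windows L f :=
  subset_biUnion_of_mem (fun v => Ico (f v) (f v + L)) (mem_univ v)

theorem card_windows_le (L : ℕ) (f : V → ℤ) : #(windows L f) ≤ Fintype.card V * L :=
  card_biUnion_le_card_mul _ _ _ fun v _ => by simp

end Compression

theorem intCast_le_sub_iff_floor_fract {R : Type*} [CommRing R] [LinearOrder R]
    [IsStrictOrderedRing R] [FloorRing R] (k : ℤ) (a b : R) :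
    (k : R) ≤ b - a ↔ k + (if Int.fract b < Int.fract a then 1 else 0) ≤ ⌊b⌋ - ⌊a⌋ := by
  have hfract : ⌊Int.fract b - Int.fract a⌋ = if Int.fract b < Int.fract a then -1 else 0 := by
    have := Int.fract_nonneg a
    have := Int.fract_nonneg b
    have := Int.fract_lt_one a
    have := Int.fract_lt_one b
    split_ifs with h <;> rw [Int.floor_eq_iff] <;> push_cast <;> constructor <;> linarith
  have hsub : b - a = Int.fract b - Int.fract a + (⌊b⌋ - ⌊a⌋ : ℤ) := by
    push_cast
    rw [Int.fract, Int.fract]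
    abel
  rw [← Int.le_floor, hsub, Int.floor_add_intCast, hfract]
  split_ifs <;> omega

section ScoreCode

open Finset

variable {V R : Type*} [Fintype V] [CommRing R] [LinearOrder R] [FloorRing R] {L : ℕ}

/-- A finite code of the score vector `ρ` that determines every comparison
`g + ρ v ≤ g' + ρ v'` with natural `g, g' < L`: compressed integer parts and ranks of fractional
parts. -/
noncomputable def scoreCode (L : ℕ) (ρ : V → R) (v : V) : ℕ × ℕ :=
  (rankIn (windows L fun a => ⌊ρ a⌋) ⌊ρ v⌋,
    rankIn (univ.image fun a => Int.fract (ρ a)) (Int.fract (ρ v)))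

theorem scoreCode_mem (hL : 0 < L) (ρ : V → R) (v : V) :
    scoreCode L ρ v ∈ range (Fintype.card V * L) ×ˢ range (Fintype.card V) := by
  rw [mem_product, mem_range, mem_range]
  constructor
  · refine (rankIn_lt_card (Ico_subset_windows L _ v ?_)).trans_le (card_windows_le L _)
    simpa using hL
  · exact (rankIn_lt_card (mem_image_of_mem _ (mem_univ v))).trans_le card_image_le

theorem add_le_add_iff_scoreCode [IsStrictOrderedRing R] {g g' : ℕ} (hg : g < L) (hg' : g' < L)
    (ρ : V → R) (v v' : V) :
    (g : R) + ρ v ≤ g' + ρ v' ↔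
      (g - g' : ℤ) + (if (scoreCode L ρ v').2 < (scoreCode L ρ v).2 then 1 else 0) ≤
        ((scoreCode L ρ v').1 : ℤ) - (scoreCode L ρ v).1 := by
  have hdiff : (g : R) + ρ v ≤ g' + ρ v' ↔ ((g - g' : ℤ) : R) ≤ ρ v' - ρ v := by
    push_cast
    rw [sub_le_sub_iff, add_comm (ρ v')]
  have hfract : (scoreCode L ρ v').2 < (scoreCode L ρ v).2 ↔ Int.fract (ρ v') < Int.fract (ρ v) :=
    rankIn_lt_rankIn_iff (mem_image_of_mem _ (mem_univ v'))
  rw [hdiff, intCast_le_sub_iff_floor_fract, if_congr hfract rfl rfl]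
  refine (le_rankIn_sub_rankIn_iff (Ico_subset_windows L (fun a => ⌊ρ a⌋) v)
    (Ico_subset_windows L (fun a => ⌊ρ a⌋) v') ?_ ?_).symm <;> split_ifs <;> omega

end ScoreCode

section PseudoDimension

open Finset

/-- The points `x i` are pseudo-shattered by the family `u θ` of functions, with thresholds `z`. -/
def PseudoShattered {Θ P S ι : Type*} [LE S] (u : Θ → P → S) (x : ι → P) : Prop :=
  ∃ z : ι → S, ∀ b : ι → Bool, ∃ θ, ∀ i, z i ≤ u θ (x i) ↔ b i = true

variable {P S ι : Type*} [Fintype ι]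

theorem PseudoShattered.two_pow_card_le_of_factorsThrough {Θ κ : Type*} [LE S] {u : Θ → P → S}
    {x : ι → P} (hx : PseudoShattered u x) {code : Θ → κ} (hcode : Function.FactorsThrough u code)
    {C : Finset κ} (hC : ∀ θ, code θ ∈ C) : 2 ^ Fintype.card ι ≤ #C := by
  classical
  obtain ⟨z, hz⟩ := hx
  choose θ hθ using hz
  have hinj : Function.Injective fun b => code (θ b) := fun b b' hbb' => funext fun i =>
    Bool.eq_iff_iff.2 <| by rw [← hθ b i, ← hθ b' i, hcode hbb']
  calc 2 ^ Fintype.card ι = #(univ : Finset (ι → Bool)) := by simp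
    _ ≤ #C := card_le_card_of_injOn _ (fun b _ => hC (θ b)) hinj.injOn

/-- Score-order invariance: `u ρ x` depends on `ρ` only through the comparisons of the scores
`g + ρ v` of the pairs `(v, g) ∈ G x`. -/
def ScoreOrderInvariant {V R : Type*} [Add R] [LE R] (G : P → Set (V × R))
    (u : (V → R) → P → S) : Prop :=
  ∀ (x : P) (ρ ρ' : V → R),
    (∀ vg ∈ G x, ∀ vg' ∈ G x,
      (vg.2 + ρ vg.1 ≤ vg'.2 + ρ vg'.1 ↔ vg.2 + ρ' vg.1 ≤ vg'.2 + ρ' vg'.1)) →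
    u ρ x = u ρ' x

variable {V R : Type*} [Fintype V] [CommRing R] [LinearOrder R] [IsStrictOrderedRing R]
  [FloorRing R] {G : P → Set (V × R)} {u : (V → R) → P → S} {L : ℕ}

theorem ScoreOrderInvariant.factorsThrough_scoreCode (hu : ScoreOrderInvariant G u)
    (hG : ∀ x, ∀ vg ∈ G x, ∃ g : ℕ, g < L ∧ vg.2 = g) :
    Function.FactorsThrough u (scoreCode L) := by
  intro ρ ρ' hcode
  funext x
  refine hu x ρ ρ' fun vg hvg vg' hvg' => ?_
  obtain ⟨g, hg, hvg_eq⟩ := hG x vg hvg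
  obtain ⟨g', hg', hvg'_eq⟩ := hG x vg' hvg'
  rw [hvg_eq, hvg'_eq, add_le_add_iff_scoreCode hg hg', add_le_add_iff_scoreCode hg hg', hcode]

theorem ScoreOrderInvariant.two_pow_card_le (hu : ScoreOrderInvariant G u) (hL : 0 < L)
    (hG : ∀ x, ∀ vg ∈ G x, ∃ g : ℕ, g < L ∧ vg.2 = g) [LE S] {x : ι → P}
    (hx : PseudoShattered u x) :
    2 ^ Fintype.card ι ≤ (Fintype.card V ^ 2 * L) ^ Fintype.card V := by
  classical
  have hcard := hx.two_pow_card_le_of_factorsThrough (hu.factorsThrough_scoreCode hG)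
    fun ρ => Fintype.mem_piFinset.2 (scoreCode_mem hL ρ)
  rw [Fintype.card_piFinset, prod_const, card_univ, card_product, card_range, card_range] at hcard
  convert hcard using 2
  ring

end PseudoDimension

section PathCost

variable {n ℓ : ℕ} {E : Finset (Fin n × Fin n)} {w : Fin n × Fin n → ℝ}

theorem exists_pathCost_eq_natCast (hw : ∀ e ∈ E, ∃ k : ℕ, k ≤ ℓ ∧ w e = k) :
    ∀ {p : List (Fin n)}, p.IsChain (fun a b => (a, b) ∈ E) →
      ∃ g : ℕ, g ≤ p.tail.length * ℓ ∧ pathCost n w p = g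
  | [], _ | [_], _ => ⟨0, by simp, by simp [pathCost]⟩
  | a :: b :: q, hp => by
    rw [List.isChain_cons_cons] at hp
    obtain ⟨k, hk, hwk⟩ := hw (a, b) hp.1
    obtain ⟨g, hg, hcost⟩ := exists_pathCost_eq_natCast hw hp.2
    refine ⟨k + g, ?_, ?_⟩
    · simp only [List.tail_cons, List.length_cons, Nat.succ_mul] at hg ⊢
      omega
    · have hcons : pathCost n w (a :: b :: q) = w (a, b) + pathCost n w (b :: q) := rfl
      rw [hcons, hwk, hcost, Nat.cast_add]

theorem IsSimplePath.tail_length_lt {s v : Fin n} {p : List (Fin n)}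
    (hp : IsSimplePath n E s v p) : p.tail.length < n := by
  have hlen : p.length ≤ n := by simpa using hp.1.length_le_card
  have := s.pos
  rw [List.length_tail]
  omega

theorem exists_natCast_eq_of_mem_Gset (hℓ : 0 < ℓ) (hw : ∀ e ∈ E, ∃ k : ℕ, k ≤ ℓ ∧ w e = k)
    {s : Fin n} {vg : Fin n × ℝ} (hvg : vg ∈ Gset n E w s) :
    ∃ g : ℕ, g < n * ℓ ∧ vg.2 = g := by
  obtain ⟨p, hp, hcost⟩ := hvg
  obtain ⟨g, hg, hpg⟩ := exists_pathCost_eq_natCast hw hp.2.2.2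
  exact ⟨g, hg.trans_lt (Nat.mul_lt_mul_of_pos_right hp.tail_length_lt hℓ), hcost.symm.trans hpg⟩

end PathCost

theorem sq_mul_mul_le_two_mul_exp_one_mul {n ℓ : ℝ} (hn : 1 ≤ n) (hℓ : 1 ≤ ℓ) :
    n ^ 2 * (n * ℓ) ≤ 2 * Real.exp 1 * n * (n ^ 2 * ℓ) ^ 2 := by
  have hexp : 1 ≤ Real.exp 1 := Real.one_le_exp zero_le_one
  have hone : 1 ≤ n ^ 2 * ℓ := one_le_mul_of_one_le_of_one_le (one_le_pow₀ hn) hℓ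
  calc n ^ 2 * (n * ℓ) = 1 * n * (n ^ 2 * ℓ) := by ring
    _ ≤ 2 * Real.exp 1 * n * (n ^ 2 * ℓ) ^ 2 := by
      gcongr
      · linarith
      · exact le_self_pow₀ hone two_ne_zero

/-- pseudo-dimension bound for A* on instances with non-negative integer
edge weights bounded by `ℓ`: any pairwise-distinct pseudo-shattered set of size `N`
satisfies `N ≤ 4n·log₂(2e·n·(n²ℓ)²)`, i.e. `Pdim = O(n lg (nℓ))`. -/
theorem stmt_7 (n ℓ : ℕ) (hn : 2 ≤ n) (hℓ : 1 ≤ ℓ) (P : Type*)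
    (E : P → Finset (Fin n × Fin n))
    (hloop : ∀ x : P, ∀ e ∈ E x, e.1 ≠ e.2)
    (w : P → Fin n × Fin n → ℝ)
    (hw : ∀ x : P, ∀ e ∈ E x, ∃ k : ℕ, k ≤ ℓ ∧ w x e = (k : ℝ))
    (s : P → Fin n)
    (u : (Fin n → ℝ) → P → ℝ)
    (hinv : ∀ (x : P) (ρ ρ' : Fin n → ℝ),
      (∀ vg ∈ Gset n (E x) (w x) (s x), ∀ vg' ∈ Gset n (E x) (w x) (s x),
        (vg.2 + ρ vg.1 ≤ vg'.2 + ρ vg'.1 ↔ vg.2 + ρ' vg.1 ≤ vg'.2 + ρ' vg'.1)) →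
      u ρ x = u ρ' x)
    (N : ℕ) (x : Fin N → P) (hx : Function.Injective x)
    (hshatter : ∃ z : Fin N → ℝ, ∀ b : Fin N → Bool, ∃ ρ : Fin n → ℝ,
      ∀ i : Fin N, (z i ≤ u ρ (x i) ↔ b i = true)) :
    (N : ℝ) ≤ 4 * n *
      Real.logb 2 (2 * Real.exp 1 * n * ((n : ℝ) ^ 2 * (ℓ : ℝ)) ^ 2) := by
  have hn' : (1 : ℝ) ≤ n := by exact_mod_cast one_le_two.trans hn
  have hℓ' : (1 : ℝ) ≤ ℓ := by exact_mod_cast hℓ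
  have hcount : 2 ^ N ≤ (n ^ 2 * (n * ℓ)) ^ n := by
    have hu : ScoreOrderInvariant (fun x => Gset n (E x) (w x) (s x)) u := hinv
    have hG x : ∀ vg ∈ Gset n (E x) (w x) (s x), ∃ g : ℕ, g < n * ℓ ∧ vg.2 = g :=
      fun _ => exists_natCast_eq_of_mem_Gset hℓ (hw x)
    simpa using hu.two_pow_card_le (by positivity) hG hshatter
  have hsize : (1 : ℝ) ≤ n ^ 2 * (n * ℓ) :=
    one_le_mul_of_one_le_of_one_le (one_le_pow₀ hn') (one_le_mul_of_one_le_of_one_le hn' hℓ')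
  have hbound := sq_mul_mul_le_two_mul_exp_one_mul hn' hℓ'
  calc (N : ℝ) ≤ Real.logb 2 (((n : ℝ) ^ 2 * (n * ℓ)) ^ n) := by
        rw [Real.le_logb_iff_rpow_le one_lt_two (by positivity), Real.rpow_natCast]
        exact_mod_cast hcount
    _ = n * Real.logb 2 ((n : ℝ) ^ 2 * (n * ℓ)) := Real.logb_pow _ _ _
    _ ≤ (4 * n) * Real.logb 2 (2 * Real.exp 1 * n * ((n : ℝ) ^ 2 * (ℓ : ℝ)) ^ 2) := by
        gcongr
        · exact Real.logb_nonneg one_lt_two hsize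
        · linarith
        · exact one_lt_two
end
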